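/- Let Ψ : ℝⁿ ⇉ ℝᵐ be locally bounded at x ∈ ℝⁿ with (cl Ψ)(x) nonempty. Then cocl Ψ is upper semicontinuous at x: (cocl Ψ)(x) is closed, and for every open set V ⊇ (cocl Ψ)(x) the set {x' | (cocl Ψ)(x') ⊆ V} is a neighborhood of x. -/

import Mathlib

/-!
The mapping `cl Ψ` has a closed graph and, near `x`, values in a fixed compact set, so it is upper
semicontinuous at `x` with compact value there. By Carathéodory's theorem the convex hull of this
value is again compact. Finally, every neighborhood of a compact convex set contains a convex
neighborhood of it, and a convex set containing `(cl Ψ)(x')` also contains its convex hull, so upper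
semicontinuity passes from `cl Ψ` to `cocl Ψ`.
-/

open Filter Topology Set

noncomputable def clMap {n m : ℕ} (Ψ : EuclideanSpace ℝ (Fin n) → Set (EuclideanSpace ℝ (Fin m)))
    (x : EuclideanSpace ℝ (Fin n)) : Set (EuclideanSpace ℝ (Fin m)) :=
  {y | (x, y) ∈ closure {p : EuclideanSpace ℝ (Fin n) × EuclideanSpace ℝ (Fin m) | p.2 ∈ Ψ p.1}}

noncomputable def coclMap {n m : ℕ} (Ψ : EuclideanSpace ℝ (Fin n) → Set (EuclideanSpace ℝ (Fin m)))
    (x : EuclideanSpace ℝ (Fin n)) : Set (EuclideanSpace ℝ (Fin m)) :=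
  convexHull ℝ (clMap Ψ x)

def LocBddAt {n m : ℕ} (Ψ : EuclideanSpace ℝ (Fin n) → Set (EuclideanSpace ℝ (Fin m)))
    (xb : EuclideanSpace ℝ (Fin n)) : Prop :=
  ∃ U ∈ 𝓝 xb, ∃ M : ℝ, 0 ≤ M ∧ ∀ x ∈ U, ∀ y ∈ Ψ x, ‖y‖ ≤ M

section ConvexHull

variable {E : Type*} [AddCommGroup E] [Module ℝ E]

/-- The set of convex combinations of `k` points of `s`, not necessarily distinct. By Carathéodory's
theorem the cases `k ≤ dim E + 1` exhaust the convex hull of `s`. -/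
def convexCombinations (k : ℕ) (s : Set E) : Set E :=
  (fun p : (Fin k → ℝ) × (Fin k → E) ↦ ∑ i, p.1 i • p.2 i) ''
    (stdSimplex ℝ (Fin k) ×ˢ univ.pi fun _ ↦ s)

lemma convexCombinations_subset_convexHull (k : ℕ) (s : Set E) :
    convexCombinations k s ⊆ convexHull ℝ s := by
  rintro _ ⟨⟨w, z⟩, ⟨⟨hw₀, hw₁⟩, hz⟩, rfl⟩
  exact mem_convexHull_of_exists_fintype w z hw₀ hw₁ (fun i ↦ hz i (mem_univ i)) rfl

lemma convexHull_eq_biUnion_convexCombinations [FiniteDimensional ℝ E] (s : Set E) :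
    convexHull ℝ s = ⋃ k ∈ Iic (Module.finrank ℝ E + 1), convexCombinations k s := by
  refine Subset.antisymm (fun y hy ↦ ?_)
    (iUnion₂_subset fun k _ ↦ convexCombinations_subset_convexHull k s)
  obtain ⟨ι, _, z, w, hz, hind, hw₀, hw₁, rfl⟩ := eq_pos_convex_span_of_mem_convexHull hy
  have hcard : Fintype.card ι ≤ Module.finrank ℝ E + 1 :=
    hind.card_le_finrank_succ.trans <| Nat.succ_le_succ <| Submodule.finrank_le _
  let e := (Fintype.equivFin ι).symm
  exact mem_biUnion hcard ⟨(w ∘ e, z ∘ e),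
    ⟨⟨fun i ↦ (hw₀ (e i)).le, (e.sum_comp w).trans hw₁⟩, fun i _ ↦ hz (mem_range_self (e i))⟩,
    e.sum_comp fun i ↦ w i • z i⟩

variable [TopologicalSpace E] [ContinuousSMul ℝ E]

lemma isCompact_convexCombinations [ContinuousAdd E] {s : Set E} (hs : IsCompact s) (k : ℕ) :
    IsCompact (convexCombinations k s) :=
  ((isCompact_stdSimplex ℝ (Fin k)).prod (isCompact_univ_pi fun _ ↦ hs)).image (by fun_prop)

lemma isCompact_convexHull [ContinuousAdd E] [FiniteDimensional ℝ E] {s : Set E}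
    (hs : IsCompact s) : IsCompact (convexHull ℝ s) := by
  rw [convexHull_eq_biUnion_convexCombinations]
  exact (finite_Iic _).isCompact_biUnion fun k _ ↦ isCompact_convexCombinations hs k

lemma locallyConvexSpace_of_finiteDimensional [IsTopologicalAddGroup E] [T2Space E]
    [FiniteDimensional ℝ E] : LocallyConvexSpace ℝ E :=
  IsInducing.locallyConvexSpace (f := (toEuclidean (E := E)).toLinearEquiv.toLinearMap)
    toEuclidean.toHomeomorph.isInducing

end ConvexHull

section LocallyConvex

open scoped Pointwise

variable {E : Type*} [AddCommGroup E] [Module ℝ E] [TopologicalSpace E] [IsTopologicalAddGroup E]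
  [ContinuousConstSMul ℝ E] [LocallyConvexSpace ℝ E]

lemma exists_isOpen_convex_between {K V : Set E} (hK : IsCompact K) (hKc : Convex ℝ K)
    (hV : IsOpen V) (hKV : K ⊆ V) : ∃ W, IsOpen W ∧ Convex ℝ W ∧ K ⊆ W ∧ W ⊆ V := by
  obtain ⟨N, hN, hKN⟩ := compact_open_separated_add_right hK hV hKV
  obtain ⟨B, ⟨hB₀, hBo, hBc⟩, hBN⟩ :=
    (LocallyConvexSpace.convex_open_basis_zero ℝ E).mem_iff.1 hN
  exact ⟨K + B, hBo.add_left, hKc.add hBc, subset_add_left K hB₀,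
    (add_subset_add_left hBN).trans hKN⟩

lemma upperHemicontinuousAt_convexHull {X : Type*} [TopologicalSpace X] {Φ : X → Set E} {x : X}
    (hΦ : UpperHemicontinuousAt Φ x) (hK : IsCompact (convexHull ℝ (Φ x))) :
    UpperHemicontinuousAt (fun x' ↦ convexHull ℝ (Φ x')) x := by
  refine .of_forall_isOpen fun V hV hKV ↦ ?_
  obtain ⟨W, hWo, hWc, hKW, hWV⟩ :=
    exists_isOpen_convex_between hK (convex_convexHull ℝ _) hV hKV
  filter_upwards [hΦ.forall_isOpen W hWo ((subset_convexHull ℝ _).trans hKW)] with x' hx'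
  exact (convexHull_min hx' hWc).trans hWV

end LocallyConvex

section ClosureMap

variable {X Y : Type*} [TopologicalSpace X] [TopologicalSpace Y] {x : X}

/-- The mapping whose graph is the closure of the graph of `Ψ`, between arbitrary topological
spaces; `clMap` is the case of Euclidean spaces. -/
def closureMap (Ψ : X → Set Y) (x : X) : Set Y :=
  {y | (x, y) ∈ closure {p : X × Y | p.2 ∈ Ψ p.1}}

lemma isClosed_graph_closureMap (Ψ : X → Set Y) :
    IsClosed {p : X × Y | p.2 ∈ closureMap Ψ p.1} :=
  isClosed_closure

lemma isClosed_closureMap (Ψ : X → Set Y) (x : X) : IsClosed (closureMap Ψ x) :=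
  (isClosed_graph_closureMap Ψ).preimage (Continuous.prodMk_right x)

lemma closureMap_subset_of_eventually {Ψ : X → Set Y} {C : Set Y} (hC : IsClosed C)
    (h : ∀ᶠ x' in 𝓝 x, Ψ x' ⊆ C) : closureMap Ψ x ⊆ C := by
  intro y hy
  have hΨ : ∃ᶠ p in 𝓝 (x, y), p.2 ∈ Ψ p.1 := mem_closure_iff_frequently.1 hy
  have hΨC : ∀ᶠ p : X × Y in 𝓝 (x, y), Ψ p.1 ⊆ C :=
    (continuous_fst.tendsto (x, y)).eventually h
  have hpC : ∃ᶠ p : X × Y in 𝓝 (x, y), p.2 ∈ C := hΨ.mp (hΨC.mono fun _ hp hy ↦ hp hy)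
  exact hC.mem_of_frequently_of_tendsto hpC continuousAt_snd

lemma upperHemicontinuousAt_of_isClosed_graph {Φ : X → Set Y} {K : Set Y}
    (hΦ : IsClosed {p : X × Y | p.2 ∈ Φ p.1}) (hK : IsCompact K)
    (hΦK : ∀ᶠ x' in 𝓝 x, Φ x' ⊆ K) : UpperHemicontinuousAt Φ x := by
  refine .of_forall_isOpen fun V hV hxV ↦ ?_
  have hdisj : ∀ᶠ x' in 𝓝 x, ∀ y ∈ K \ V, y ∉ Φ x' :=
    (hK.diff hV).eventually_forall_of_forall_eventually fun y hy ↦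
      hΦ.isOpen_compl.eventually_mem fun hyx ↦ hy.2 (hxV hyx)
  filter_upwards [hΦK, hdisj] with x' hx'K hx'V y hy
  by_contra hyV
  exact hx'V y ⟨hx'K hy, hyV⟩ hy

lemma upperHemicontinuousAt_closureMap {Ψ : X → Set Y} {K : Set Y} (hK : IsCompact K)
    (hKc : IsClosed K) (h : ∀ᶠ x' in 𝓝 x, Ψ x' ⊆ K) :
    UpperHemicontinuousAt (closureMap Ψ) x :=
  upperHemicontinuousAt_of_isClosed_graph (isClosed_graph_closureMap Ψ) hK <|
    h.eventually_nhds.mono fun _ ↦ closureMap_subset_of_eventually hKc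

end ClosureMap

theorem cocl_upperSemicontinuous_general {X E : Type*} [TopologicalSpace X] [AddCommGroup E]
    [Module ℝ E] [TopologicalSpace E] [IsTopologicalAddGroup E] [ContinuousSMul ℝ E] [T2Space E]
    [FiniteDimensional ℝ E] {Ψ : X → Set E} {x : X} {K : Set E} (hK : IsCompact K)
    (h : ∀ᶠ x' in 𝓝 x, Ψ x' ⊆ K) :
    IsClosed (convexHull ℝ (closureMap Ψ x)) ∧
      UpperHemicontinuousAt (fun x' ↦ convexHull ℝ (closureMap Ψ x')) x := by
  have : LocallyConvexSpace ℝ E := locallyConvexSpace_of_finiteDimensional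
  have hcl : IsCompact (closureMap Ψ x) :=
    hK.of_isClosed_subset (isClosed_closureMap Ψ x) (closureMap_subset_of_eventually hK.isClosed h)
  have hco : IsCompact (convexHull ℝ (closureMap Ψ x)) := isCompact_convexHull hcl
  exact ⟨hco.isClosed,
    upperHemicontinuousAt_convexHull (upperHemicontinuousAt_closureMap hK hK.isClosed h) hco⟩

/-- If `Ψ` is locally bounded at `x` and `(cl Ψ)(x)` is nonempty, then `cocl Ψ` is upper
semicontinuous at `x`: `(cocl Ψ)(x)` is closed and for every open `V ⊇ (cocl Ψ)(x)`,
the set `{x' | (cocl Ψ)(x') ⊆ V}` is a neighborhood of `x`. -/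
theorem cocl_upperSemicontinuous {n m : ℕ}
    (Ψ : EuclideanSpace ℝ (Fin n) → Set (EuclideanSpace ℝ (Fin m)))
    (x : EuclideanSpace ℝ (Fin n)) (h : LocBddAt Ψ x) (hne : (clMap Ψ x).Nonempty) :
    IsClosed (coclMap Ψ x) ∧
    ∀ V : Set (EuclideanSpace ℝ (Fin m)), IsOpen V → coclMap Ψ x ⊆ V →
      {x' | coclMap Ψ x' ⊆ V} ∈ 𝓝 x := by
  obtain ⟨U, hU, M, -, hM⟩ := h
  have hball : ∀ᶠ x' in 𝓝 x, Ψ x' ⊆ Metric.closedBall 0 M :=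
    mem_of_superset hU fun x' hx' y hy ↦ mem_closedBall_zero_iff.2 (hM x' hx' y hy)
  exact (cocl_upperSemicontinuous_general (isCompact_closedBall 0 M) hball).imp_right
    UpperHemicontinuousAt.forall_isOpen
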